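/- Let G = (V, E) be a finite simple undirected graph, let k be a positive natural number, and let e = {x, y} ∈ E be an edge such that x and y are not k-edge-connected in G. Then for every vertex set S ⊆ V, the induced subgraph G[S] is k-edge-connected if and only if the induced subgraph (G − e)[S] is k-edge-connected, where G − e is G with the edge e deleted. Consequently, G and G − e have exactly the same maximal k-edge-connected subgraphs. -/

import Mathlib

open SimpleGraph

/-- `s` and `t` are `k`-edge-connected in `G`: for every set `F` of edges of `G` with
`|F| < k`, `s` and `t` are reachable from one another in the graph obtained from `G`
by deleting the edges of `F`. -/
def KEdgeConn {V : Type*} (G : SimpleGraph V) (k : ℕ) (s t : V) : Prop :=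
  ∀ F : Finset (Sym2 V), ↑F ⊆ G.edgeSet → F.card < k →
    (G.deleteEdges ↑F).Reachable s t

/-- The set of edges of `G` with exactly one endpoint in `S`, i.e. `E(S, V \ S)`. -/
def crossingEdges {V : Type*} (G : SimpleGraph V) (S : Set V) : Set (Sym2 V) :=
  {e | e ∈ G.edgeSet ∧ ∃ x ∈ S, ∃ y ∉ S, e = s(x, y)}

/-- The induced subgraph `G[S]` is `k`-edge-connected: every pair of vertices of `S`
is `k`-edge-connected in `G[S]`. -/
def IndKConn {V : Type*} (G : SimpleGraph V) (k : ℕ) (S : Set V) : Prop :=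
  ∀ s t : S, KEdgeConn (G.induce S) k s t

/-!
Injective homomorphisms preserve `k`-edge-reachability, because the preimage of a set of edges is
no larger than the set itself. Applied to `G[S] → G`, this shows that a `k`-edge-connected `G[S]`
cannot contain both ends of an edge whose ends are not `k`-edge-connected in `G`. Hence deleting
such edges leaves every `k`-edge-connected `G[S]` unchanged, while it cannot make any other `G[S]`
`k`-edge-connected.
-/

section

variable {V W : Type*} {G : SimpleGraph V} {H : SimpleGraph W} {k : ℕ} {u v : V} {S : Set V}

theorem KEdgeConn.symm (h : KEdgeConn G k u v) : KEdgeConn G k v u :=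
  fun F hFG hF ↦ (h F hFG hF).symm

theorem kEdgeConn_iff_isEdgeReachable : KEdgeConn G k u v ↔ G.IsEdgeReachable k u v := by
  refine ⟨fun h s hs ↦ ?_, fun h F _ hF ↦ h (by simpa using hF)⟩
  have hcard : (s ∩ G.edgeSet).encard < k :=
    (Set.encard_le_encard Set.inter_subset_left).trans_lt hs
  rw [deleteEdges_eq_inter_edgeSet]
  lift s ∩ G.edgeSet to Finset (Sym2 V) using Set.finite_of_encard_le_coe hcard.le with F hF
  exact h F (hF ▸ Set.inter_subset_right) (by simpa using hcard)

theorem indKConn_iff_isEdgeConnected : IndKConn G k S ↔ (G.induce S).IsEdgeConnected k :=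
  forall₂_congr fun _ _ ↦ kEdgeConn_iff_isEdgeReachable

theorem isEdgeReachable_map (h : G.IsEdgeReachable k u v) (f : G →g H)
    (hf : Function.Injective f) : H.IsEdgeReachable k (f u) (f v) := by
  intro s hs
  have hcard : (Sym2.map f ⁻¹' s).encard < k :=
    (Set.encard_le_encard_of_injOn (Set.mapsTo_preimage _ _)
      (Sym2.map.injective hf).injOn).trans_lt hs
  let g : G.deleteEdges (Sym2.map f ⁻¹' s) →g H.deleteEdges s :=
    ⟨f, fun hab ↦ deleteEdges_adj.mpr
      ⟨f.map_adj (deleteEdges_adj.mp hab).1, (deleteEdges_adj.mp hab).2⟩⟩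
  exact (h hcard).map g

theorem isEdgeReachable_of_isEdgeConnected_induce (h : (G.induce S).IsEdgeConnected k)
    (hu : u ∈ S) (hv : v ∈ S) : G.IsEdgeReachable k u v :=
  isEdgeReachable_map (h ⟨u, hu⟩ ⟨v, hv⟩) (Embedding.induce S).toHom Subtype.val_injective

theorem induce_deleteEdges_of_isEdgeConnected {D : Set (Sym2 V)}
    (hD : ∀ a b, s(a, b) ∈ D → ¬ G.IsEdgeReachable k a b)
    (h : (G.induce S).IsEdgeConnected k) : (G.deleteEdges D).induce S = G.induce S := by
  ext a b
  have hab : s(a.1, b.1) ∉ D := fun hmem ↦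
    hD a b hmem (isEdgeReachable_of_isEdgeConnected_induce h a.2 b.2)
  simp [hab]

theorem isEdgeConnected_induce_deleteEdges_iff {D : Set (Sym2 V)}
    (hD : ∀ a b, s(a, b) ∈ D → ¬ G.IsEdgeReachable k a b) :
    ((G.deleteEdges D).induce S).IsEdgeConnected k ↔ (G.induce S).IsEdgeConnected k := by
  refine ⟨fun h a b ↦ (h a b).mono (comap_monotone _ (deleteEdges_le D)), fun h ↦ ?_⟩
  rwa [induce_deleteEdges_of_isEdgeConnected hD h]

end

theorem stmt13_general {V : Type*} (G : SimpleGraph V) (k : ℕ) (D : Set (Sym2 V))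
    (hD : ∀ a b, s(a, b) ∈ D → ¬ KEdgeConn G k a b) :
    (∀ S : Set V, IndKConn G k S ↔ IndKConn (G.deleteEdges D) k S) ∧
    {S : Set V | IndKConn G k S ∧ ∀ S' : Set V, S ⊆ S' → IndKConn G k S' → S' = S} =
      {S : Set V | IndKConn (G.deleteEdges D) k S ∧
        ∀ S' : Set V, S ⊆ S' → IndKConn (G.deleteEdges D) k S' → S' = S} := by
  have hiff (S : Set V) : IndKConn G k S ↔ IndKConn (G.deleteEdges D) k S := by
    simp only [kEdgeConn_iff_isEdgeReachable] at hD
    simp only [indKConn_iff_isEdgeConnected, isEdgeConnected_induce_deleteEdges_iff hD]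
  exact ⟨hiff, by simp only [hiff]⟩

/-- If `e = {x, y}` is an edge of `G` whose endpoints are not `k`-edge-connected in `G`,
then for every `S ⊆ V`, `G[S]` is `k`-edge-connected iff `(G - e)[S]` is; consequently
`G` and `G - e` have exactly the same maximal `k`-edge-connected subgraphs. -/
theorem stmt13 {V : Type*} [Fintype V] (G : SimpleGraph V) (k : ℕ) (hk : 0 < k)
    (x y : V) (hxy : G.Adj x y) (hnk : ¬ KEdgeConn G k x y) :
    (∀ S : Set V, IndKConn G k S ↔ IndKConn (G.deleteEdges {s(x, y)}) k S) ∧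
    {S : Set V | IndKConn G k S ∧ ∀ S' : Set V, S ⊆ S' → IndKConn G k S' → S' = S} =
      {S : Set V | IndKConn (G.deleteEdges {s(x, y)}) k S ∧
        ∀ S' : Set V, S ⊆ S' → IndKConn (G.deleteEdges {s(x, y)}) k S' → S' = S} :=
  stmt13_general G k {s(x, y)} (by grind [KEdgeConn.symm])
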